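/- arXiv:1007.2675 — 4 statements merged into one kernel-verified Lean document; each statement's English description precedes it below -/
import Mathlib

section
/- Let p be a prime number and let k, t, d ≥ 1 be natural numbers with t ≤ k and k · p^{k+1} ≤ p^d. Then p^2 times the number of t-tuples of vectors in (Z_p)^d that are NOT linearly independent over Z_p is at most p^{d·t}, the total number of t-tuples; that is, the proportion of linearly dependent t-tuples is at most 1/p^2. In particular, for p ≥ 2, a uniformly random t-tuple is linearly independent with probability at least 3/4. -/
/-! With `N = p ^ d`, there are `∏ i < t, (N - p ^ i)` independent `t`-tuples
(`card_linearIndependent`). Weierstrass' product inequality (`pow_le_prod_sub`), applied with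
`p ^ i ≤ p ^ (t - 1)`, bounds the number of dependent tuples by `t * p ^ (t - 1) * N ^ (t - 1)`.
Multiplying by `p ^ 2` gives at most `k * p ^ (k + 1) * N ^ (t - 1) ≤ N ^ t`.
The probability bound follows by passing to the complement, since `p ^ 2 ≥ 4`. -/

/-- Weierstrass' product inequality `∏ (1 - a i / N) ≥ 1 - t * c / N`, with denominators cleared;
the extra factor `N` avoids the exponent `t - 1`. -/
lemma pow_le_prod_sub (N c : ℕ) (a : ℕ → ℕ) (hc : c ≤ N) (t : ℕ) (ha : ∀ i < t, a i ≤ c) :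
    N ^ (t + 1) ≤ N * ∏ i ∈ Finset.range t, (N - a i) + t * c * N ^ t := by
  induction t with
  | zero => simp
  | succ t ih =>
    have ih := ih fun i hi => ha i (by omega)
    have hat : a t ≤ c := ha t (by omega)
    rw [Finset.prod_range_succ]
    have hP : ∏ i ∈ Finset.range t, (N - a i) ≤ N ^ t := by
      calc _ ≤ ∏ _i ∈ Finset.range t, N := Finset.prod_le_prod' fun i _ => Nat.sub_le _ _
        _ = _ := by simp
    generalize ∏ i ∈ Finset.range t, (N - a i) = P at *
    obtain ⟨m, hm⟩ : ∃ m, N = m + a t := ⟨N - a t, by omega⟩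
    have hm' : N - a t = m := by omega
    rw [hm']
    calc N ^ (t + 1 + 1) = N * N ^ (t + 1) := by ring
      _ ≤ N * (N * P + t * c * N ^ t) := by gcongr
      _ = N * P * N + t * c * N ^ (t + 1) := by ring
      _ = N * P * m + N * P * a t + t * c * N ^ (t + 1) := by
          nth_rewrite 2 [hm]; ring
      _ ≤ N * P * m + N * N ^ t * c + t * c * N ^ (t + 1) := by gcongr
      _ = _ := by ring


/-- Let `p` be prime and `k, t, d ≥ 1` with `t ≤ k` and `k·p^{k+1} ≤ p^d`.  Then `p²`
times the number of `t`-tuples of vectors in `(ZMod p)^d` that are NOT linearly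
independent is at most `p^{d·t}`, the total number of `t`-tuples (so the proportion of
dependent tuples is at most `1/p²`); in particular a uniformly random `t`-tuple is
linearly independent with probability at least `3/4`. -/
theorem card_not_linearIndependent_small (p k t d : ℕ) (hp : p.Prime)
    (hk : 1 ≤ k) (ht : 1 ≤ t) (hd : 1 ≤ d) (htk : t ≤ k)
    (hbound : k * p ^ (k + 1) ≤ p ^ d) :
    p ^ 2 * Nat.card {v : Fin t → (Fin d → ZMod p) // ¬ LinearIndependent (ZMod p) v}
        ≤ p ^ (d * t) ∧
      (3 / 4 : ℝ) ≤
        (Nat.card {v : Fin t → (Fin d → ZMod p) // LinearIndependent (ZMod p) v} : ℝ)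
          / (p : ℝ) ^ (d * t) := by
  have : Fact p.Prime := ⟨hp⟩
  have hp0 : 0 < p := hp.pos
  have hkd : k + 1 ≤ d := by
    rw [← Nat.pow_le_pow_iff_right hp.one_lt]
    exact (Nat.le_mul_of_pos_left _ hk).trans hbound
  have hind := card_linearIndependent (K := ZMod p) (V := Fin d → ZMod p) (k := t)
    (by simp; omega)
  rw [Module.finrank_fin_fun, ZMod.card,
    Fin.prod_univ_eq_prod_range (fun i => p ^ d - p ^ i) t] at hind
  have hsum : Nat.card {v : Fin t → (Fin d → ZMod p) // LinearIndependent (ZMod p) v} +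
      Nat.card {v : Fin t → (Fin d → ZMod p) // ¬ LinearIndependent (ZMod p) v}
        = p ^ (d * t) := by
    classical
    rw [← Nat.card_sum, Nat.card_congr (Equiv.sumCompl _)]
    simp [pow_mul]
  have hW := pow_le_prod_sub (p ^ d) (p ^ (t - 1)) (fun i => p ^ i)
    (Nat.pow_le_pow_right hp0 (by omega)) t
    fun i hi => Nat.pow_le_pow_right hp0 (by omega)
  rw [← hind] at hW
  generalize Nat.card {v : Fin t → (Fin d → ZMod p) // LinearIndependent (ZMod p) v} = I at *
  generalize Nat.card {v : Fin t → (Fin d → ZMod p) // ¬ LinearIndependent (ZMod p) v} = D at *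
  rw [pow_mul] at hsum
  have hN : 0 < p ^ d := by positivity
  have hD : p ^ d * D ≤ t * p ^ (t - 1) * (p ^ d) ^ t := by
    have h : (p ^ d) ^ (t + 1) = p ^ d * I + p ^ d * D := by rw [← mul_add, hsum]; ring
    omega
  have main : p ^ 2 * D ≤ p ^ (d * t) := by
    rw [pow_mul]
    refine Nat.le_of_mul_le_mul_left ?_ hN
    calc p ^ d * (p ^ 2 * D) = p ^ 2 * (p ^ d * D) := by ring
      _ ≤ p ^ 2 * (t * p ^ (t - 1) * (p ^ d) ^ t) := by gcongr
      _ = t * p ^ (t - 1 + 2) * (p ^ d) ^ t := by ring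
      _ ≤ k * p ^ (k + 1) * (p ^ d) ^ t := by
          have h := Nat.pow_le_pow_right hp0 (show t - 1 + 2 ≤ k + 1 by omega)
          exact Nat.mul_le_mul_right _ (Nat.mul_le_mul htk h)
      _ ≤ p ^ d * (p ^ d) ^ t := by gcongr
  refine ⟨main, ?_⟩
  rw [← pow_mul] at hsum
  have h4 : 4 * D ≤ p ^ (d * t) :=
    (Nat.mul_le_mul_right D (Nat.pow_le_pow_left hp.two_le 2)).trans main
  have hpos : (0 : ℝ) < (p : ℝ) ^ (d * t) := by positivity
  rw [le_div_iff₀ hpos]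
  have h3 : 3 * p ^ (d * t) ≤ 4 * I := by omega
  have h3' : (3 : ℝ) * (p : ℝ) ^ (d * t) ≤ 4 * I := by exact_mod_cast h3
  linarith
end

section
/- Let p be a prime number, n ≥ 1, d ≥ 1, and let F be a multivariate polynomial in n variables over Z_p such that every monomial in the support of F has some variable occurring with exponent at least p (i.e., F has no p-monomial in its sum-product expansion). Then for every assignment v_1, …, v_n of vectors in (Z_p)^d, evaluating F at x_i = (p-1)·of(v_i) + 1 in the group algebra Z_p[Z_p^d] yields 0. -/
/-!
Each element `(p - 1) g + 1`, with `g` an element of the group `(ZMod p)^d`, has vanishing `p`-th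
power in the group algebra (`smul_of_add_one_pow_prime`). Hence every monomial with an exponent at
least `p` evaluates to `0` at such elements, and so does a polynomial made of such monomials.
-/

/-- The base elements are nilpotent: in characteristic `p` the Frobenius is additive, so
`((p - 1) g + 1) ^ p = (p - 1) ^ p g ^ p + 1 = (p - 1) + 1 = 0`, because `g ^ p = 1` for every
element `g` of the elementary abelian group. -/
theorem smul_of_add_one_pow_prime (p : ℕ) (hp : p.Prime) (d : ℕ) (w : Fin d → ZMod p) :
    (((p - 1 : ℕ) : ZMod p) • AddMonoidAlgebra.of' (ZMod p) (Fin d → ZMod p) w + 1) ^ p = 0 := by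
  have : Fact p.Prime := ⟨hp⟩
  have : CharP (AddMonoidAlgebra (ZMod p) (Fin d → ZMod p)) p :=
    charP_of_injective_algebraMap
      (algebraMap (ZMod p) (AddMonoidAlgebra (ZMod p) (Fin d → ZMod p))).injective p
  have hw : p • w = 0 := by
    ext i
    simp
  have hg : AddMonoidAlgebra.of' (ZMod p) (Fin d → ZMod p) w ^ p = 1 := by
    rw [AddMonoidAlgebra.of'_apply, AddMonoidAlgebra.single_pow, hw, one_pow,
      AddMonoidAlgebra.one_def]
  have hc : ((p - 1 : ℕ) : ZMod p) + 1 = 0 := by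
    rw [← Nat.cast_add_one, Nat.sub_add_cancel hp.one_le, CharP.cast_eq_zero]
  rw [add_pow_char, smul_pow, hg, one_pow, ZMod.pow_card]
  nth_rewrite 2 [← one_smul (ZMod p) (1 : AddMonoidAlgebra (ZMod p) (Fin d → ZMod p))]
  rw [← add_smul, hc, zero_smul]


/-- Let `p` be prime, `n, d ≥ 1`, and let `F` be a multivariate polynomial in `n`
variables over `ZMod p` all of whose monomials have some variable with exponent at least
`p` (no `p`-monomial in the sum-product expansion).  Then for every assignment
`v_1, …, v_n` of vectors in `(ZMod p)^d`, evaluating `F` at `x_i = (p-1)·of(v_i) + 1`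
in the group algebra `Z_p[Z_p^d]` yields `0`. -/
theorem eval_eq_zero_of_no_p_monomial (p : ℕ) (hp : p.Prime) (n d : ℕ)
    (hn : 1 ≤ n) (hd : 1 ≤ d) (F : MvPolynomial (Fin n) (ZMod p))
    (hF : ∀ a ∈ F.support, ∃ i, p ≤ a i) (v : Fin n → (Fin d → ZMod p)) :
    MvPolynomial.aeval
        (fun i : Fin n =>
          ((p - 1 : ℕ) : ZMod p) • AddMonoidAlgebra.of' (ZMod p) (Fin d → ZMod p) (v i) + 1)
        F = 0 := by
  rw [MvPolynomial.aeval_def, MvPolynomial.eval₂_eq']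
  refine Finset.sum_eq_zero fun a ha => ?_
  obtain ⟨i, hi⟩ := hF a ha
  -- The factor with exponent at least `p` kills the monomial.
  rw [Finset.prod_eq_zero (Finset.mem_univ i), mul_zero]
  exact pow_eq_zero_of_le hi (smul_of_add_one_pow_prime p hp d (v i))
end

section
/- Let G be a simple graph on the vertex set {1,…,n}, let c ≥ 1 and k ≥ 1 be integers, and define the polynomials p_{k,i} over ℕ by p_{1,i} = x_i^c and p_{k+1,i} = x_i^c · (Σ_{j adjacent to i} p_{k,j}), and p(G,k) = Σ_{i=1}^n p_{k,i}. Then for every set S of k distinct vertices, the coefficient in p(G,k) of the monomial Π_{i ∈ S} x_i^c (degree ck, exponent c on each vertex of S and 0 elsewhere) is nonzero if and only if G contains a simple path on exactly k vertices whose vertex set is S. -/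
/-!
Unfolding the recursion, `P (m + 1) i` is the generating function of the walks with `m` edges
starting at `i`, where a walk visiting `v₀, …, v_m` contributes `x_{v₀}^c ⋯ x_{v_m}^c`.
Coefficients live in `ℕ`, so nothing cancels: a monomial has nonzero coefficient iff some walk
contributes it (`coeff_ne_zero_iff_exists_walk`). The exponent of `x_v` in the contribution of a
walk is `c` times the number of visits to `v`, so for `c ≥ 1` the monomial `∏_{i ∈ S} x_i^c`
arises exactly from the walks visiting each vertex of `S` once and no other vertex
(`sum_single_eq_iff`); these are the paths with vertex set `S`.
-/

/-- No cancellation occurs over `ℕ`, so the monomials of `P (m + 1) i` are exactly those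
contributed by walks with `m` edges starting at `i`. -/
lemma coeff_ne_zero_iff_exists_walk {n : ℕ} (G : SimpleGraph (Fin n))
    [DecidableRel G.Adj] (c : ℕ) (P : ℕ → Fin n → MvPolynomial (Fin n) ℕ)
    (hP1 : ∀ i : Fin n, P 1 i = MvPolynomial.X i ^ c)
    (hPsucc : ∀ m : ℕ, 1 ≤ m → ∀ i : Fin n,
      P (m + 1) i = MvPolynomial.X i ^ c * ∑ j ∈ G.neighborFinset i, P m j)
    (m : ℕ) (i : Fin n) (d : Fin n →₀ ℕ) :
    MvPolynomial.coeff d (P (m + 1) i) ≠ 0 ↔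
      ∃ (w : Fin n) (W : G.Walk i w), W.length = m ∧
        (W.support.map fun v => Finsupp.single v c).sum = d := by
  induction m generalizing i d with
  | zero =>
    rw [zero_add, hP1, MvPolynomial.coeff_X_pow]
    constructor
    · intro h
      exact ⟨i, .nil, rfl, by simpa using h⟩
    · rintro ⟨w, W, hW, hd⟩
      cases W with
      | nil => simpa using hd
      | cons h p => simp at hW
  | succ m ih =>
    rw [hPsucc (m + 1) (by omega), MvPolynomial.X_pow_eq_monomial,
      MvPolynomial.coeff_monomial_mul', MvPolynomial.coeff_sum]
    simp only [one_mul, ne_eq, ite_eq_right_iff, Finset.sum_eq_zero_iff, not_forall, exists_prop,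
      SimpleGraph.mem_neighborFinset]
    constructor
    · rintro ⟨hle, j, hj, h⟩
      obtain ⟨w, W, hW, hd⟩ := (ih j _).1 h
      refine ⟨w, .cons hj W, by simp [hW], ?_⟩
      simp [hd, add_tsub_cancel_of_le hle]
    · rintro ⟨w, W, hW, hd⟩
      cases W with
      | nil => simp at hW
      | @cons _ j _ hj p =>
        simp only [SimpleGraph.Walk.support_cons, List.map_cons, List.sum_cons] at hd
        subst hd
        refine ⟨le_self_add, j, hj, (ih j _).2 ⟨w, p, by simpa using hW, ?_⟩⟩
        rw [add_tsub_cancel_left]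

lemma sum_map_single_apply {α : Type*} [DecidableEq α] (c : ℕ) (l : List α) (v : α) :
    (l.map fun u => Finsupp.single u c).sum v = l.count v * c := by
  induction l with
  | nil => simp
  | cons a l ih =>
    simp only [List.map_cons, List.sum_cons, Finsupp.add_apply, ih, List.count_cons,
      Finsupp.single_apply, beq_iff_eq]
    split_ifs <;> ring

/-- A list contributes the monomial `∏_{i ∈ S} x_i^c` iff it enumerates `S` without repetition. -/
lemma sum_single_eq_iff {α : Type*} [DecidableEq α] {c : ℕ} (hc : 1 ≤ c) (l : List α)
    (S : Finset α) :
    (l.map fun u => Finsupp.single u c).sum = ∑ i ∈ S, Finsupp.single i c ↔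
      l.Nodup ∧ l.toFinset = S := by
  constructor
  · intro h
    have key : ∀ v, l.count v = if v ∈ S then 1 else 0 := by
      intro v
      have hv := DFunLike.congr_fun h v
      rw [sum_map_single_apply, Finsupp.finsetSum_apply] at hv
      simp only [Finsupp.single_apply, Finset.sum_ite_eq'] at hv
      apply Nat.eq_of_mul_eq_mul_right hc
      rw [hv]
      split_ifs <;> simp
    refine ⟨List.nodup_iff_count_le_one.2 fun v => ?_, ?_⟩
    · rw [key]
      split_ifs <;> simp
    · ext v
      rw [List.mem_toFinset, ← List.count_pos_iff, key]
      split_ifs <;> simp_all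
  · rintro ⟨hl, rfl⟩
    exact (List.sum_toFinset _ hl).symm


/-- Let `G` be a simple graph on `{1,…,n}`, `c ≥ 1`, `k ≥ 1`, and let `P k i` be the
polynomials over `ℕ` defined by `P 1 i = x_i^c` and
`P (k+1) i = x_i^c · (∑_{j adjacent to i} P k j)` for `k ≥ 1`; put
`p(G,k) = ∑_{i=1}^n P k i`.  Then for every set `S` of `k` distinct vertices, the
coefficient in `p(G,k)` of the monomial `∏_{i ∈ S} x_i^c` is nonzero iff `G` contains a
simple path on exactly `k` vertices whose vertex set is `S`. -/
theorem kPath_polynomial_coeff (n : ℕ) (G : SimpleGraph (Fin n))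
    [DecidableRel G.Adj] (c k : ℕ) (hc : 1 ≤ c) (hk : 1 ≤ k)
    (P : ℕ → Fin n → MvPolynomial (Fin n) ℕ)
    (hP1 : ∀ i : Fin n, P 1 i = MvPolynomial.X i ^ c)
    (hPsucc : ∀ m : ℕ, 1 ≤ m → ∀ i : Fin n,
      P (m + 1) i = MvPolynomial.X i ^ c * ∑ j ∈ G.neighborFinset i, P m j)
    (S : Finset (Fin n)) (hS : S.card = k) :
    MvPolynomial.coeff (∑ i ∈ S, Finsupp.single i c) (∑ i : Fin n, P k i) ≠ 0 ↔
      ∃ (u w : Fin n) (W : G.Walk u w), W.IsPath ∧ W.support.length = k ∧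
        W.support.toFinset = S := by
  obtain ⟨m, rfl⟩ : ∃ m, k = m + 1 := ⟨k - 1, by omega⟩
  rw [MvPolynomial.coeff_sum, ne_eq, Finset.sum_eq_zero_iff]
  simp only [Finset.mem_univ, true_imp_iff, not_forall,
    coeff_ne_zero_iff_exists_walk G c P hP1 hPsucc, sum_single_eq_iff hc,
    SimpleGraph.Walk.isPath_def, SimpleGraph.Walk.length_support, Nat.add_right_cancel_iff]
  constructor
  · rintro ⟨u, w, W, h1, h2, h3⟩
    exact ⟨u, w, W, h2, h1, h3⟩
  · rintro ⟨u, w, W, h1, h2, h3⟩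
    exact ⟨u, w, W, h2, h1, h3⟩
end

section
/- Let G be a simple graph on the vertex set {1,…,m}, with one variable x_e for each unordered pair e of distinct vertices. Define the polynomials f(G,t) over ℕ by f(G,1) = 1, f(G,2) = Σ_{e ∈ E(G)} x_e, and f(G,t+1) = Σ_{i=1}^m (Σ_{j adjacent to i} x_{{i,j}})^t · f(G,t) for t ≥ 2. Then for every integer k ≥ 1 and every set A of k vertices, the coefficient in f(G,k) of the k-clique monomial with respect to A, namely Π_{{a,b} ⊆ A, a ≠ b} x_{{a,b}} (a multilinear monomial of degree k(k-1)/2), is nonzero if and only if A is a clique of G (every two distinct vertices of A are adjacent). -/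
/-!
All coefficients are natural numbers, so nothing cancels: a monomial occurs in a sum as soon as it
occurs in a summand, and a product of occurring monomials occurs in the product of polynomials.

Every variable of `f k` is an edge of `G`, so if the clique monomial of `A` occurs in `f k`, then
all pairs in `A` are edges. Conversely, let `A` be a clique with `t + 1` elements, `a ∈ A` and
`B = A \ {a}`. The clique monomial of `A` is that of `B`, which occurs in `f t` by induction, times
`∏_{j ∈ B} x_{{a,j}}`, which occurs in `(∑_{j adjacent to a} x_{{a,j}}) ^ t` because the `t`
elements of `B` are neighbours of `a`.
-/

open MvPolynomial in
theorem coeff_sum_ne_zero_of_mem {σ ι : Type*} (s : Finset ι) (p : ι → MvPolynomial σ ℕ)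
    (u : σ →₀ ℕ) {i : ι} (hi : i ∈ s) (h : coeff u (p i) ≠ 0) :
    coeff u (∑ i ∈ s, p i) ≠ 0 := by
  rw [coeff_sum]
  intro h0
  exact h (Finset.sum_eq_zero_iff.1 h0 i hi)

open MvPolynomial in
theorem coeff_add_mul_ne_zero {σ : Type*} (p q : MvPolynomial σ ℕ) (u v : σ →₀ ℕ)
    (hu : coeff u p ≠ 0) (hv : coeff v q ≠ 0) : coeff (u + v) (p * q) ≠ 0 := by
  classical
  rw [coeff_mul]
  intro h0
  have := Finset.sum_eq_zero_iff.1 h0 (u, v) (by simp)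
  exact mul_ne_zero hu hv this

open MvPolynomial in
theorem coeff_sum_X_pow_card_ne_zero {σ ι : Type*} (N B : Finset ι) (g : ι → σ) (hB : B ⊆ N) :
    coeff (∑ j ∈ B, Finsupp.single (g j) 1)
      ((∑ j ∈ N, (X (g j) : MvPolynomial σ ℕ)) ^ B.card) ≠ 0 := by
  classical
  induction B using Finset.induction_on with
  | empty => simp
  | insert a B ha ih =>
    rw [Finset.sum_insert ha, Finset.card_insert_of_notMem ha, pow_succ']
    refine coeff_add_mul_ne_zero _ _ _ _ ?_ (ih fun x hx => hB (Finset.mem_insert_of_mem hx))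
    exact coeff_sum_ne_zero_of_mem _ _ _ (hB (Finset.mem_insert_self a B)) (by simp)

/-- The exponent vector of the clique monomial with respect to `A`: each unordered pair of distinct
elements of `A` has exponent one. -/
noncomputable def cliqueExponent {V : Type*} [DecidableEq V] (A : Finset V) : Sym2 V →₀ ℕ :=
  ∑ e ∈ A.sym2.filter (fun e => ¬ e.IsDiag), Finsupp.single e 1

theorem cliqueExponent_insert {V : Type*} [DecidableEq V] (a : V) (B : Finset V) (ha : a ∉ B) :
    cliqueExponent (insert a B) = ∑ j ∈ B, Finsupp.single s(a, j) 1 + cliqueExponent B := by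
  have hset : (insert a B).sym2.filter (fun e => ¬ e.IsDiag) =
      B.image (fun j => s(a, j)) ∪ B.sym2.filter (fun e => ¬ e.IsDiag) := by
    ext e
    induction e using Sym2.ind with
    | _ x y =>
      simp only [Finset.mem_filter, Finset.mk_mem_sym2_iff, Finset.mem_insert, Finset.mem_union,
        Finset.mem_image, Sym2.mk_isDiag_iff, Sym2.eq_iff]
      grind
  have hdisj : Disjoint (B.image (fun j => s(a, j))) (B.sym2.filter (fun e => ¬ e.IsDiag)) := by
    rw [Finset.disjoint_left]
    intro e he he'
    obtain ⟨j, -, rfl⟩ := Finset.mem_image.1 he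
    exact ha (Finset.mk_mem_sym2_iff.1 (Finset.mem_filter.1 he').1).1
  unfold cliqueExponent
  rw [hset, Finset.sum_union hdisj, Finset.sum_image]
  intro x _ y _ h
  exact Sym2.congr_right.1 h

theorem cliqueExponent_singleton {V : Type*} [DecidableEq V] (a : V) :
    cliqueExponent ({a} : Finset V) = 0 := by
  simp [cliqueExponent, Finset.sum_filter]

theorem cliqueExponent_apply_ne_zero {V : Type*} [DecidableEq V] (A : Finset V) {a b : V}
    (ha : a ∈ A) (hb : b ∈ A) (hab : a ≠ b) : cliqueExponent A s(a, b) ≠ 0 := by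
  unfold cliqueExponent
  rw [Finsupp.finsetSum_apply]
  intro h0
  have := Finset.sum_eq_zero_iff.1 h0 s(a, b) (by simp [ha, hb, hab])
  simp at this

/-- Let `G` be a simple graph on `{1,…,m}`, with one variable `x_e` for each unordered
pair `e` of distinct vertices.  Let `f t` be the polynomials over `ℕ` defined by
`f 1 = 1`, `f 2 = ∑_{e ∈ E(G)} x_e`, and
`f (t+1) = ∑_{i=1}^m (∑_{j adjacent to i} x_{{i,j}})^t · f t` for `t ≥ 2`.
Then for every `k ≥ 1` and every set `A` of `k` vertices, the coefficient in `f k` of the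
`k`-clique monomial `∏_{{a,b} ⊆ A, a ≠ b} x_{{a,b}}` is nonzero iff `A` is a clique. -/
theorem clique_polynomial_coeff (m : ℕ) (G : SimpleGraph (Fin m))
    [DecidableRel G.Adj] (f : ℕ → MvPolynomial (Sym2 (Fin m)) ℕ)
    (hf1 : f 1 = 1)
    (hf2 : f 2 = ∑ e ∈ G.edgeFinset, MvPolynomial.X e)
    (hfsucc : ∀ t : ℕ, 2 ≤ t →
      f (t + 1) = ∑ i : Fin m,
        (∑ j ∈ G.neighborFinset i, MvPolynomial.X (s(i, j))) ^ t * f t)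
    (k : ℕ) (hk : 1 ≤ k) (A : Finset (Fin m)) (hA : A.card = k) :
    MvPolynomial.coeff
        (∑ e ∈ A.sym2.filter (fun e => ¬ e.IsDiag), Finsupp.single e 1) (f k) ≠ 0 ↔
      G.IsClique (A : Set (Fin m)) := by
  classical
  change MvPolynomial.coeff (cliqueExponent A) (f k) ≠ 0 ↔ _
  constructor
  · -- Every variable occurring in `f t` is an edge of `G`.
    have hsupp : ∀ t, 1 ≤ t → f t ∈ MvPolynomial.supported ℕ G.edgeSet := by
      intro t ht
      induction t, ht using Nat.le_induction with
      | base => rw [hf1]; exact one_mem _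
      | succ t ht ih =>
        obtain rfl | ht2 := ht.eq_or_lt
        · rw [hf2]
          refine sum_mem fun e he => ?_
          exact MvPolynomial.X_mem_supported.2 (SimpleGraph.mem_edgeFinset.1 he)
        · rw [hfsucc t ht2]
          refine sum_mem fun i _ => mul_mem (pow_mem (sum_mem fun j hj => ?_) _) ih
          exact MvPolynomial.X_mem_supported.2 ((G.mem_neighborFinset i j).1 hj)
    intro h a ha b hb hab
    have hv : s(a, b) ∈ (f k).vars := by
      rw [MvPolynomial.mem_vars_iff_mem_support]
      exact ⟨_, MvPolynomial.mem_support_iff.2 h,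
        Finsupp.mem_support_iff.2 (cliqueExponent_apply_ne_zero A ha hb hab)⟩
    exact MvPolynomial.mem_supported.1 (hsupp k hk) hv
  · intro hcl
    obtain rfl | hk2 := hk.eq_or_lt
    · obtain ⟨a, rfl⟩ := Finset.card_eq_one.1 hA
      simp [cliqueExponent_singleton, hf1]
    · induction k, hk2 using Nat.le_induction generalizing A with
      | base =>
        obtain ⟨a, b, hab, rfl⟩ := Finset.card_eq_two.1 hA
        rw [hf2, cliqueExponent_insert a {b} (by simpa using hab), cliqueExponent_singleton,
          Finset.sum_singleton, add_zero]
        have hadj : G.Adj a b := hcl (by simp) (by simp) hab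
        exact coeff_sum_ne_zero_of_mem _ _ _ (i := s(a, b))
          (SimpleGraph.mem_edgeFinset.2 hadj) (by simp)
      | succ t ht ih =>
        obtain ⟨a, B, ha, rfl, hB⟩ := Finset.card_eq_succ.1 hA
        rw [hfsucc t ht, cliqueExponent_insert a B ha]
        refine coeff_sum_ne_zero_of_mem _ _ _ (Finset.mem_univ a) ?_
        refine coeff_add_mul_ne_zero _ _ _ _ ?_ ?_
        · have hsub : B ⊆ G.neighborFinset a := fun j hj =>
            (G.mem_neighborFinset a j).2
              (hcl (by simp) (by simp [hj]) (fun h => ha (h ▸ hj)))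
          have := coeff_sum_X_pow_card_ne_zero _ B (fun j => s(a, j)) hsub
          rwa [hB] at this
        · exact ih (by lia) B hB (hcl.subset (by simp))
end
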